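/- Let p ≡ 1 (mod 4) be prime, let p divide n, let Q_p ⊆ {1, …, p−1} be the set of nonzero quadratic residues modulo p, and let a, b, c be integers coprime to p with Legendre symbols (a|p) = −(c|p). Let X = {((aq+b)·(n/p) + 1) mod n : q ∈ Q_p} ∪ {((cq−b)·(n/p) − 1) mod n : q ∈ Q_p}, and assume these p−1 elements of ℤ/nℤ are distinct. Then for every y ∈ ℤ/nℤ whose integer representative ỹ is divisible by p, one has σ_X(y) = (p−1)·cos(2πỹ/n); in particular σ_X(y) is a real number in the interval [1−p, p−1]. -/

import Mathlib

open Complex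

/-- `e(θ) = exp(2πiθ)`. -/
noncomputable def e2 (θ : ℝ) : ℂ := Complex.exp (2 * Real.pi * Complex.I * θ)

/-- The cyclic supercharacter attached to a subset `X` of `ℤ/nℤ`:
`σ_X(y) = Σ_{x ∈ X} e(xy/n)`. -/
noncomputable def superchar (n : ℕ) (X : Set (ZMod n)) (y : ZMod n) : ℂ :=
  ∑ᶠ x ∈ X, e2 (((x.val * y.val : ℕ) : ℝ) / (n : ℝ))

/-- The orbit `Ar = {ar : a ∈ A}` of `r` under a unit subgroup `A`. -/
def unitOrbit (n : ℕ) (A : Subgroup (ZMod n)ˣ) (r : ZMod n) : Set (ZMod n) :=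
  (fun a : (ZMod n)ˣ => (a : ZMod n) * r) '' (A : Set (ZMod n)ˣ)


theorem e2_val (n : ℕ) [NeZero n] (x y : ZMod n) :
    e2 (((x.val * y.val : ℕ) : ℝ) / (n : ℝ)) = ZMod.stdAddChar (x * y) := by
  have h : x * y = (((x.val * y.val : ℕ) : ℤ) : ZMod n) := by
    push_cast
    simp
  rw [h, ZMod.stdAddChar_coe, e2]
  congr 1
  push_cast
  ring

theorem stdAddChar_val (n : ℕ) [NeZero n] (y : ZMod n) :
    (ZMod.stdAddChar y : ℂ) + ZMod.stdAddChar (-y)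
      = 2 * Complex.cos (2 * Real.pi * (y.val : ℂ) / (n : ℂ)) := by
  have h : y = (((y.val : ℕ) : ℤ) : ZMod n) := by simp
  have h2 : -y = ((-((y.val : ℕ) : ℤ) : ℤ) : ZMod n) := by simp
  have e1 : (ZMod.stdAddChar y : ℂ) = Complex.exp (2 * Real.pi * Complex.I * (y.val : ℂ) / n) := by
    conv_lhs => rw [h]
    rw [ZMod.stdAddChar_coe]; push_cast; rfl
  have e3 : (ZMod.stdAddChar (-y) : ℂ)
      = Complex.exp (-(2 * Real.pi * Complex.I * (y.val : ℂ) / n)) := by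
    rw [h2, ZMod.stdAddChar_coe]; push_cast; congr 1; ring
  rw [e1, e3, Complex.two_cos]
  congr 2 <;> ring

theorem qp_subset (p : ℕ) [hp : Fact p.Prime] :
    {q : ℕ | 0 < q ∧ q < p ∧ ∃ t : ZMod p, t ^ 2 = (q : ZMod p)} ⊆
      (((Finset.Icc 1 (p / 2)).image (fun m => m ^ 2 % p) : Finset ℕ) : Set ℕ) := by
  rintro q ⟨h0, h1, t, ht⟩
  simp only [Finset.coe_image, Set.mem_image, Finset.coe_Icc, Set.mem_Icc]
  refine ⟨t.valMinAbs.natAbs, ⟨?_, ZMod.natAbs_valMinAbs_le t⟩, ?_⟩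
  · rw [Nat.one_le_iff_ne_zero, Ne, Int.natAbs_eq_zero, ZMod.valMinAbs_eq_zero]
    rintro rfl
    rw [zero_pow two_ne_zero, eq_comm, ZMod.natCast_eq_zero_iff] at ht
    exact absurd (Nat.le_of_dvd h0 ht) (by omega)
  · have : ((t.valMinAbs.natAbs ^ 2 : ℕ) : ZMod p) = (q : ZMod p) := by
      rw [← ht]
      have h3 : ((t.valMinAbs.natAbs ^ 2 : ℕ) : ℤ) = t.valMinAbs ^ 2 := by
        push_cast; exact sq_abs _
      have h4 := congrArg (fun z : ℤ => (z : ZMod p)) h3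
      push_cast at h4
      simpa using h4
    rw [ZMod.natCast_eq_natCast_iff'] at this
    rw [this, Nat.mod_eq_of_lt h1]

theorem stmt14 (n p : ℕ) [hp : Fact p.Prime] (hp4 : p % 4 = 1) (hpn : p ∣ n)
    (Qp : Set ℕ) (hQp : Qp = {q : ℕ | 0 < q ∧ q < p ∧ ∃ t : ZMod p, t ^ 2 = (q : ZMod p)})
    (a b c : ℤ) (hap : ¬ (p : ℤ) ∣ a) (hbp : ¬ (p : ℤ) ∣ b) (hcp : ¬ (p : ℤ) ∣ c)
    (hleg : legendreSym p a = - legendreSym p c)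
    (X : Set (ZMod n))
    (hX : X = (fun q : ℕ => ((a * q + b : ℤ) : ZMod n) * ((n / p : ℕ) : ZMod n) + 1) '' Qp
        ∪ (fun q : ℕ => ((c * q - b : ℤ) : ZMod n) * ((n / p : ℕ) : ZMod n) - 1) '' Qp)
    (hdist : X.ncard = p - 1)
    (y : ZMod n) (hy : p ∣ y.val) :
    superchar n X y
      = ((((p : ℝ) - 1) * Real.cos (2 * Real.pi * (y.val : ℝ) / (n : ℝ)) : ℝ) : ℂ)
    ∧ (superchar n X y).im = 0
    ∧ 1 - (p : ℝ) ≤ (superchar n X y).re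
    ∧ (superchar n X y).re ≤ (p : ℝ) - 1 := by
  classical
  have hfin : Qp.Finite := by
    rw [hQp]; exact (Finset.finite_toSet _).subset (qp_subset p)
  have hcard : Qp.ncard ≤ p / 2 := by
    rw [hQp]
    refine (Set.ncard_le_ncard (qp_subset p) (Finset.finite_toSet _)).trans ?_
    rw [Set.ncard_coe_finset]
    exact Finset.card_image_le.trans (by simp)
  have hp2 := hp.out.two_le
  have hn : n ≠ 0 := by
    rintro rfl
    have hsub : X ⊆ {1, -1} := by
      rw [hX]
      rintro x (⟨q, -, rfl⟩ | ⟨q, -, rfl⟩)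
      · left; simp
      · right; simp
    have := Set.ncard_le_ncard hsub (by simp)
    have h2 := Set.ncard_insert_le (1 : ZMod 0) {-1}
    rw [Set.ncard_singleton] at h2
    omega
  haveI : NeZero n := ⟨hn⟩
  have hzero : ((n / p : ℕ) : ZMod n) * y = 0 := by
    obtain ⟨m, hm⟩ := hy
    have h : y = ((p * m : ℕ) : ZMod n) := by rw [← hm]; simp
    rw [h, ← Nat.cast_mul, ← mul_assoc, Nat.div_mul_cancel hpn]
    simp
  set f := (fun q : ℕ => ((a * q + b : ℤ) : ZMod n) * ((n / p : ℕ) : ZMod n) + 1) with hf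
  set g := (fun q : ℕ => ((c * q - b : ℤ) : ZMod n) * ((n / p : ℕ) : ZMod n) - 1) with hg
  have hA : (f '' Qp).ncard ≤ p / 2 := (Set.ncard_image_le hfin).trans hcard
  have hB : (g '' Qp).ncard ≤ p / 2 := (Set.ncard_image_le hfin).trans hcard
  have hAf : (f '' Qp).Finite := hfin.image _
  have hBf : (g '' Qp).Finite := hfin.image _
  have hU := Set.ncard_union_add_ncard_inter (f '' Qp) (g '' Qp) hAf hBf
  rw [← hX, hdist] at hU
  have hA' : (f '' Qp).ncard = p / 2 := by omega
  have hB' : (g '' Qp).ncard = p / 2 := by omega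
  have hI : (f '' Qp ∩ g '' Qp).ncard = 0 := by omega
  rw [Set.ncard_eq_zero (hAf.inter_of_left _)] at hI
  have hdisj : Disjoint (f '' Qp) (g '' Qp) := Set.disjoint_iff_inter_eq_empty.2 hI
  have hs1 : ∑ᶠ x ∈ f '' Qp, e2 (((x.val * y.val : ℕ) : ℝ) / (n : ℝ))
      = (p / 2 : ℕ) * (ZMod.stdAddChar y : ℂ) := by
    rw [finsum_mem_eq_finite_toFinset_sum _ hAf, Finset.sum_congr rfl
      (g := fun _ => (ZMod.stdAddChar y : ℂ)), Finset.sum_const,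
      ← Set.ncard_eq_toFinset_card _ hAf, hA', nsmul_eq_mul]
    intro x hx
    obtain ⟨q, -, rfl⟩ := hAf.mem_toFinset.1 hx
    rw [e2_val]
    congr 1
    simp only [hf]
    rw [add_mul, mul_assoc, hzero]; ring
  have hs2 : ∑ᶠ x ∈ g '' Qp, e2 (((x.val * y.val : ℕ) : ℝ) / (n : ℝ))
      = (p / 2 : ℕ) * (ZMod.stdAddChar (-y) : ℂ) := by
    rw [finsum_mem_eq_finite_toFinset_sum _ hBf, Finset.sum_congr rfl
      (g := fun _ => (ZMod.stdAddChar (-y) : ℂ)), Finset.sum_const,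
      ← Set.ncard_eq_toFinset_card _ hBf, hB', nsmul_eq_mul]
    intro x hx
    obtain ⟨q, -, rfl⟩ := hBf.mem_toFinset.1 hx
    rw [e2_val]
    congr 1
    simp only [hg]
    rw [sub_mul, mul_assoc, hzero]; ring
  have hpc : (p : ℂ) - 1 = 2 * ((p / 2 : ℕ) : ℂ) := by
    have h : p = 2 * (p / 2) + 1 := by omega
    have h' := congrArg (fun k : ℕ => (k : ℂ)) h
    simp only [Nat.cast_add, Nat.cast_mul, Nat.cast_ofNat, Nat.cast_one] at h'
    linear_combination h'
  have main : superchar n X y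
      = ((((p : ℝ) - 1) * Real.cos (2 * Real.pi * (y.val : ℝ) / (n : ℝ)) : ℝ) : ℂ) := by
    rw [superchar, hX, finsum_mem_union hdisj hAf hBf, hs1, hs2, ← mul_add, stdAddChar_val]
    push_cast
    rw [hpc]; ring
  have hp1 : (0 : ℝ) ≤ (p : ℝ) - 1 := by
    have : (2 : ℝ) ≤ p := by exact_mod_cast hp2
    linarith
  refine ⟨main, ?_, ?_, ?_⟩
  · rw [main, Complex.ofReal_im]
  · rw [main, Complex.ofReal_re]
    nlinarith [Real.neg_one_le_cos (2 * Real.pi * (y.val : ℝ) / (n : ℝ))]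
  · rw [main, Complex.ofReal_re]
    nlinarith [Real.cos_le_one (2 * Real.pi * (y.val : ℝ) / (n : ℝ))]
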